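/- Let d ≥ 1, 1 < p ≤ 2, and k₁, k₂ ∈ ℝ. Suppose there exists a constant C > 0 such that ‖(1−Δ)^{k₂/2}(ℱf)‖_{L^p(ℝ^d)} ≤ C·‖(1−Δ)^{k₁/2} f‖_{L^p(ℝ^d)} for every Schwartz function f on ℝ^d. Then k₂ ≤ 0. -/

import Mathlib

open MeasureTheory Complex Real
open scoped ENNReal RealInnerProductSpace

noncomputable section

abbrev E (d : ℕ) : Type := EuclideanSpace ℝ (Fin d)

/-- The Fourier transform `ℱu(ξ) = ∫ exp(-i x·ξ) u(x) dx`. -/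
def FT (d : ℕ) (u : E d → ℂ) (ξ : E d) : ℂ :=
  ∫ x, Complex.exp (-Complex.I * (⟪x, ξ⟫ : ℂ)) * u x

/-- The Bessel potential `(1-Δ)^{k/2} u = ℱ⁻¹((1+|ξ|²)^{k/2} ℱu)`. -/
def bessel (d : ℕ) (k : ℝ) (u : E d → ℂ) (x : E d) : ℂ :=
  (((2 * π) ^ d : ℝ) : ℂ)⁻¹ *
    ∫ ξ, Complex.exp (Complex.I * (⟪x, ξ⟫ : ℂ)) * (((1 + ‖ξ‖ ^ 2) ^ (k / 2) : ℝ) : ℂ) *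
      FT d u ξ

open scoped FourierTransform SchwartzMap

theorem FT_eq_fourier (d : ℕ) (u : E d → ℂ) (ξ : E d) :
    FT d u ξ = 𝓕 u ((2 * π)⁻¹ • ξ) := by
  rw [Real.fourier_eq', FT]
  congr 1
  ext x
  rw [inner_smul_right, smul_eq_mul]
  congr 2
  push_cast
  field_simp

theorem FT_FT (d : ℕ) (f : 𝓢(E d, ℂ)) (η : E d) :
    FT d (FT d f) η = (((2 * π) ^ d : ℝ) : ℂ) * f (-η) := by
  have h2 : FT d f = fun ξ => 𝓕 (f : E d → ℂ) ((2 * π)⁻¹ • ξ) :=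
    funext fun ξ => FT_eq_fourier d f ξ
  have h1 : (fun x : E d => Complex.exp (-Complex.I * (⟪x, η⟫ : ℂ)) * FT d f x) =
      fun x => (fun y : E d => Complex.exp (((-2 * π * ⟪y, η⟫ : ℝ) : ℂ) * Complex.I) •
        𝓕 (f : E d → ℂ) y) ((2 * π)⁻¹ • x) := by
    ext x
    simp only [h2, inner_smul_left, smul_eq_mul]
    congr 2
    simp only [conj_trivial]
    push_cast
    field_simp
  rw [FT, h1, Measure.integral_comp_inv_smul volume (fun y : E d =>
    Complex.exp (((-2 * π * ⟪y, η⟫ : ℝ) : ℂ) * Complex.I) • 𝓕 (f : E d → ℂ) y), ← Real.fourier_eq', ← neg_neg η,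
    ← Real.fourierInv_eq_fourier_neg, f.continuous.fourierInv_fourier_eq f.integrable
      (𝓕 f).integrable, neg_neg, finrank_euclideanSpace_fin, abs_of_pos (by positivity)]
  simp

theorem bessel_FT (d : ℕ) (k : ℝ) (f : 𝓢(E d, ℂ)) (x : E d) :
    bessel d k (FT d f) x = ∫ ξ, Complex.exp (Complex.I * (⟪x, ξ⟫ : ℂ)) *
      (((1 + ‖ξ‖ ^ 2) ^ (k / 2) : ℝ) : ℂ) * f (-ξ) := by
  have hc : (((2 * π) ^ d : ℝ) : ℂ) ≠ 0 := by
    exact_mod_cast (by positivity : ((2 * π) ^ d : ℝ) ≠ 0)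
  simp only [bessel, FT_FT]
  rw [← integral_const_mul]
  congr 1
  ext ξ
  field_simp

theorem FT_translate (d : ℕ) (u : E d → ℂ) (a ξ : E d) :
    FT d (fun x => u (x - a)) ξ = Complex.exp (-Complex.I * (⟪a, ξ⟫ : ℂ)) * FT d u ξ := by
  rw [FT, FT, ← integral_const_mul, ← integral_add_right_eq_self _ a]
  congr 1
  ext x
  rw [add_sub_cancel_right, ← mul_assoc, ← Complex.exp_add, inner_add_left]
  congr 2
  push_cast
  ring

theorem bessel_translate (d : ℕ) (k : ℝ) (u : E d → ℂ) (a x : E d) :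
    bessel d k (fun x => u (x - a)) x = bessel d k u (x - a) := by
  simp only [bessel, FT_translate]
  congr 2
  ext ξ
  have : Complex.exp (Complex.I * (⟪x - a, ξ⟫ : ℂ)) =
      Complex.exp (Complex.I * (⟪x, ξ⟫ : ℂ)) * Complex.exp (-Complex.I * (⟪a, ξ⟫ : ℂ)) := by
    rw [← Complex.exp_add, inner_sub_left]
    congr 1
    push_cast
    ring
  rw [this]
  ring

theorem hasTemperateGrowth_besselSymbol (d : ℕ) (k : ℝ) :
    (fun ξ : E d => (((1 + ‖ξ‖ ^ 2) ^ (k / 2) : ℝ) : ℂ)).HasTemperateGrowth :=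
  Complex.ofRealCLM.hasTemperateGrowth.comp
    (Function.hasTemperateGrowth_one_add_norm_sq_rpow (E d) (k / 2))

/-- The Schwartz function `ξ ↦ (1+|ξ|²)^{k/2} f(-ξ)`. -/
def weightedReflection (d : ℕ) (k : ℝ) (f : 𝓢(E d, ℂ)) : 𝓢(E d, ℂ) :=
  SchwartzMap.smulLeftCLM ℂ (fun ξ : E d => (((1 + ‖ξ‖ ^ 2) ^ (k / 2) : ℝ) : ℂ))
    (SchwartzMap.compCLMOfContinuousLinearEquiv ℂ (LinearIsometryEquiv.neg ℝ (E := E d)) f)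

theorem weightedReflection_apply (d : ℕ) (k : ℝ) (f : 𝓢(E d, ℂ)) (ξ : E d) :
    weightedReflection d k f ξ = (((1 + ‖ξ‖ ^ 2) ^ (k / 2) : ℝ) : ℂ) * f (-ξ) := by
  rw [weightedReflection, SchwartzMap.smulLeftCLM_apply_apply (hasTemperateGrowth_besselSymbol d k)]
  simp

theorem bessel_FT_eq_fourier (d : ℕ) (k : ℝ) (f : 𝓢(E d, ℂ)) (x : E d) :
    bessel d k (FT d f) x = (𝓕 (weightedReflection d k f)) (-(2 * π)⁻¹ • x) := by
  rw [bessel_FT, SchwartzMap.fourier_coe, Real.fourier_eq']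
  congr 1
  ext ξ
  rw [weightedReflection_apply, mul_assoc, inner_smul_right, smul_eq_mul, real_inner_comm]
  congr 2
  push_cast
  field_simp

theorem integrable_norm_bessel_FT_rpow (d : ℕ) {p : ℝ} (hp : 0 < p) (k : ℝ) (f : 𝓢(E d, ℂ)) :
    Integrable fun x => ‖bessel d k (FT d f) x‖ ^ p := by
  have h := ((𝓕 (weightedReflection d k f)).memLp (ENNReal.ofReal p)).integrable_norm_rpow
    (by simpa using hp) ENNReal.ofReal_ne_top
  rw [ENNReal.toReal_ofReal hp.le] at h
  simp only [bessel_FT_eq_fourier]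
  exact h.comp_smul (R := -(2 * π)⁻¹) (neg_ne_zero.2 (by positivity))

theorem integrable_bessel_FT_integrand (d : ℕ) (k : ℝ) (f : 𝓢(E d, ℂ)) (x : E d) :
    Integrable fun ξ : E d => Complex.exp (Complex.I * (⟪x, ξ⟫ : ℂ)) *
      (((1 + ‖ξ‖ ^ 2) ^ (k / 2) : ℝ) : ℂ) * f (-ξ) := by
  simp only [mul_assoc, ← weightedReflection_apply]
  refine (weightedReflection d k f).integrable.bdd_mul (c := 1) ?_ ?_
  · exact Continuous.aestronglyMeasurable (by fun_prop)
  · refine Filter.Eventually.of_forall fun ξ => ?_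
    rw [mul_comm, Complex.norm_exp_ofReal_mul_I]

theorem le_norm_bessel_FT_translate (d : ℕ) {k : ℝ} (hk : 0 ≤ k) (φ : E d → ℝ)
    (hφ0 : ∀ x, 0 ≤ φ x) (hφ1 : ∀ x, φ x ≠ 0 → ‖x‖ ≤ 1) (hφi : Integrable φ) (a : E d)
    (ha : 1 ≤ ‖a‖) (f : 𝓢(E d, ℂ)) (hf : ∀ x, f x = (φ (x - a) : ℂ)) (x : E d) (hx : ‖x‖ ≤ 1) :
    (1 + (‖a‖ - 1) ^ 2) ^ (k / 2) * (2⁻¹ * ∫ y, φ y) ≤ ‖bessel d k (FT d f) x‖ := by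
  have hint := (integrable_bessel_FT_integrand d k f x).const_mul
    (Complex.exp (Complex.I * (⟪x, a⟫ : ℂ)))
  have hnorm : ‖bessel d k (FT d f) x‖ = ‖∫ ξ, Complex.exp (Complex.I * (⟪x, a⟫ : ℂ)) *
      (Complex.exp (Complex.I * (⟪x, ξ⟫ : ℂ)) *
        (((1 + ‖ξ‖ ^ 2) ^ (k / 2) : ℝ) : ℂ) * f (-ξ))‖ := by
    rw [integral_const_mul, norm_mul, mul_comm Complex.I, Complex.norm_exp_ofReal_mul_I, one_mul,
      bessel_FT]
  have hre : ∀ ξ : E d, (Complex.exp (Complex.I * (⟪x, a⟫ : ℂ)) *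
      (Complex.exp (Complex.I * (⟪x, ξ⟫ : ℂ)) *
        (((1 + ‖ξ‖ ^ 2) ^ (k / 2) : ℝ) : ℂ) * f (-ξ))).re =
      Real.cos ⟪x, a + ξ⟫ * (1 + ‖ξ‖ ^ 2) ^ (k / 2) * φ (-ξ - a) := by
    intro ξ
    rw [hf, mul_assoc, ← mul_assoc, ← Complex.exp_add, ← mul_add, ← Complex.ofReal_add,
      ← inner_add_right, ← Complex.ofReal_mul, Complex.re_mul_ofReal, mul_comm Complex.I,
      Complex.exp_ofReal_mul_I_re, mul_assoc]
  rw [hnorm]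
  refine le_trans ?_ (Complex.re_le_norm _)
  rw [← RCLike.re_eq_complex_re, ← integral_re hint]
  have hshift : ∫ y, φ y = ∫ ξ, φ (-ξ - a) := by
    rw [integral_neg_eq_self (fun ξ => φ (ξ - a)), integral_sub_right_eq_self]
  rw [hshift, ← mul_assoc, ← integral_const_mul]
  refine integral_mono (((hφi.comp_sub_right a).comp_neg).const_mul _) hint.re fun ξ => ?_
  simp only [RCLike.re_eq_complex_re, hre]
  by_cases h0 : φ (-ξ - a) = 0
  · simp [h0]
  have hb : ‖a + ξ‖ ≤ 1 := by
    have := hφ1 _ h0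
    rwa [← norm_neg, neg_sub, sub_neg_eq_add] at this
  refine mul_le_mul_of_nonneg_right ?_ (hφ0 _)
  rw [mul_comm]
  have hi : |⟪x, a + ξ⟫| ≤ 1 := (abs_real_inner_le_norm _ _).trans (by
    nlinarith [norm_nonneg x, norm_nonneg (a + ξ)])
  have hcos : 2⁻¹ ≤ Real.cos ⟪x, a + ξ⟫ := by
    have h1 := Real.one_sub_sq_div_two_le_cos (x := ⟪x, a + ξ⟫)
    have h2 : ⟪x, a + ξ⟫ ^ 2 ≤ 1 := (sq_le_one_iff_abs_le_one _).2 hi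
    linarith
  have hn : ‖a‖ - 1 ≤ ‖ξ‖ := by
    have := norm_sub_le (a + ξ) ξ
    rw [add_sub_cancel_right] at this
    linarith
  have hw : (1 + (‖a‖ - 1) ^ 2) ^ (k / 2) ≤ (1 + ‖ξ‖ ^ 2) ^ (k / 2) :=
    Real.rpow_le_rpow (by positivity)
      (by nlinarith [sub_nonneg.2 ha]) (by positivity)
  exact mul_le_mul hcos hw (by positivity) (le_trans (by norm_num) hcos)

/-- necessity of `k₂ ≤ 0` for `1 < p ≤ 2`: if
`‖(1-Δ)^{k₂/2}(ℱf)‖_{L^p} ≤ C·‖(1-Δ)^{k₁/2}f‖_{L^p}` for all Schwartz `f`,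
then `k₂ ≤ 0`. -/
theorem stmt19 (d : ℕ) (hd : 1 ≤ d) (p : ℝ) (hp1 : 1 < p) (hp2 : p ≤ 2) (k₁ k₂ : ℝ)
    (h : ∃ C > (0 : ℝ), ∀ f : SchwartzMap (E d) ℂ,
      (∫ x : E d, ‖bessel d k₂ (FT d (⇑f)) x‖ ^ p) ^ (1 / p) ≤
        C * (∫ x : E d, ‖bessel d k₁ (⇑f) x‖ ^ p) ^ (1 / p)) :
    k₂ ≤ 0 := by
  obtain ⟨C, hC, h⟩ := h
  by_contra! hk
  have hp : 0 < p := by linarith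
  let φ : ContDiffBump (0 : E d) := ⟨2⁻¹, 1, by norm_num, by norm_num⟩
  have hsupp : HasCompactSupport fun x : E d => (φ x : ℂ) :=
    φ.hasCompactSupport.comp_left (g := fun t : ℝ => (t : ℂ)) Complex.ofReal_zero
  have hsmooth : ContDiff ℝ (⊤ : ℕ∞) fun x : E d => (φ x : ℂ) :=
    Complex.ofRealCLM.contDiff.comp φ.contDiff
  let f : 𝓢(E d, ℂ) := hsupp.toSchwartzMap hsmooth
  set R := C * (∫ x : E d, ‖bessel d k₁ f x‖ ^ p) ^ (1 / p) with hR
  set V := volume.real (Metric.closedBall (0 : E d) 1)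
  have hVpos : 0 < V := ENNReal.toReal_pos (Metric.measure_closedBall_pos _ _ one_pos).ne'
    measure_closedBall_lt_top.ne
  set c := 2⁻¹ * ∫ y, φ y
  have hcpos : 0 < c := mul_pos (by norm_num) φ.integral_pos
  have key : ∀ t : ℝ, 1 ≤ t → (1 + (t - 1) ^ 2) ^ (k₂ / 2) * (c * V ^ (1 / p)) ≤ R := by
    intro t ht
    let a : E d := EuclideanSpace.single ⟨0, hd⟩ t
    have hna : ‖a‖ = t := by
      simp [a, abs_of_nonneg (zero_le_one.trans ht)]
    have hbound := h (f.compSubConstCLM ℂ a)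
    have htrans : ∫ x : E d, ‖bessel d k₁ (f.compSubConstCLM ℂ a) x‖ ^ p =
        ∫ x : E d, ‖bessel d k₁ f x‖ ^ p := by
      rw [← integral_sub_right_eq_self (fun x : E d => ‖bessel d k₁ f x‖ ^ p) a]
      congr 1
      ext x
      rw [← bessel_translate]
      rfl
    rw [htrans, ← hR] at hbound
    refine le_trans ?_ hbound
    set M := (1 + (t - 1) ^ 2) ^ (k₂ / 2)
    have hM0 : 0 ≤ M := by positivity
    have hlow : ∀ x ∈ Metric.closedBall (0 : E d) 1,
        (M * c) ^ p ≤ ‖bessel d k₂ (FT d (f.compSubConstCLM ℂ a)) x‖ ^ p := by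
      intro x hx
      refine Real.rpow_le_rpow (by positivity) ?_ hp.le
      have := le_norm_bessel_FT_translate d hk.le φ (fun _ => φ.nonneg)
        (fun y hy => by
          have : y ∈ Function.support φ := hy
          rw [φ.support_eq] at this
          exact (mem_ball_zero_iff.1 this).le)
        φ.integrable a (hna ▸ ht) (f.compSubConstCLM ℂ a) (fun _ => rfl) x
        (mem_closedBall_zero_iff.1 hx)
      rwa [hna] at this
    have hi := integrable_norm_bessel_FT_rpow d hp k₂ (f.compSubConstCLM ℂ a)
    have hmass : (M * c) ^ p * V ≤
        ∫ x : E d, ‖bessel d k₂ (FT d (f.compSubConstCLM ℂ a)) x‖ ^ p :=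
      (setIntegral_ge_of_const_le_real Metric.isClosed_closedBall.measurableSet
        measure_closedBall_lt_top.ne hlow hi.integrableOn).trans
        (setIntegral_le_integral hi (Filter.Eventually.of_forall fun _ => by positivity))
    calc M * (c * V ^ (1 / p)) = ((M * c) ^ p * V) ^ (1 / p) := by
          rw [Real.mul_rpow (by positivity) hVpos.le, ← Real.rpow_mul (by positivity),
            mul_one_div_cancel hp.ne', Real.rpow_one, ← mul_assoc M c]
      _ ≤ _ := Real.rpow_le_rpow (by positivity) hmass (by positivity)
  have hlim : Filter.Tendsto (fun t : ℝ => (1 + (t - 1) ^ 2) ^ (k₂ / 2) * (c * V ^ (1 / p)))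
      Filter.atTop Filter.atTop := by
    refine Filter.Tendsto.atTop_mul_const (by positivity) ?_
    refine (tendsto_rpow_atTop (by positivity)).comp ?_
    refine Filter.tendsto_atTop_add_const_left _ _ ?_
    exact (Filter.tendsto_pow_atTop two_ne_zero).comp
      (Filter.tendsto_atTop_add_const_right _ (-1) Filter.tendsto_id)
  obtain ⟨t, ht1, ht⟩ := ((Filter.eventually_ge_atTop 1).and
    (hlim.eventually_gt_atTop R)).exists
  exact absurd (key t ht1) (not_le.2 ht)
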